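/- arXiv:2505.15515 — 7 statements merged into one kernel-verified Lean document; each statement's English description precedes it below -/
import Mathlib

section
/- SACBFs induced by CBFs (Proposition 1). Let B : 𝒳 → ℝ be a CBF with constant β_B ∈ (0,1]. Then the function Q^B(x,u) := max{ h(x), (1/β_B)·B(f(x,u)) } is an SACBF with safe set S_Q = S_B := {x ∈ 𝒳 : B(x) ≤ 0}. -/
/-- `QB` is a state-action control barrier function (SACBF) for the system `f`
with state space `𝒳`, input set `U`, state constraint `h ≤ 0`, and safe set `SQ`. -/
def IsSACBF {nx nu : ℕ} (𝒳 : Set (EuclideanSpace ℝ (Fin nx)))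
    (U : Set (EuclideanSpace ℝ (Fin nu)))
    (f : EuclideanSpace ℝ (Fin nx) → EuclideanSpace ℝ (Fin nu) → EuclideanSpace ℝ (Fin nx))
    (h : EuclideanSpace ℝ (Fin nx) → ℝ)
    (QB : EuclideanSpace ℝ (Fin nx) → EuclideanSpace ℝ (Fin nu) → ℝ)
    (SQ : Set (EuclideanSpace ℝ (Fin nx))) : Prop :=
  SQ ⊆ 𝒳 ∧ SQ.Nonempty ∧ (∀ x ∈ SQ, h x ≤ 0) ∧
    (∀ x ∈ SQ, ∃ u ∈ U, QB x u ≤ 0) ∧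
    (∀ x ∈ SQ, ∀ u ∈ U, QB x u ≤ 0 → f x u ∈ SQ)

/-- Proposition 1: a CBF `B` with constant `βB ∈ (0,1]` induces the SACBF
`Q^B(x,u) = max { h(x), (1/βB)·B(f(x,u)) }` whose safe set is `S_B = {x ∈ 𝒳 : B x ≤ 0}`. -/
theorem SACBF_induced_by_CBF {nx nu : ℕ}
    (𝒳 : Set (EuclideanSpace ℝ (Fin nx)))
    (U : Set (EuclideanSpace ℝ (Fin nu)))
    (hUne : U.Nonempty) (hUcomp : IsCompact U)
    (f : EuclideanSpace ℝ (Fin nx) → EuclideanSpace ℝ (Fin nu) → EuclideanSpace ℝ (Fin nx))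
    (hf : ∀ x ∈ 𝒳, ∀ u ∈ U, f x u ∈ 𝒳)
    (h B : EuclideanSpace ℝ (Fin nx) → ℝ)
    (βB : ℝ) (hβ0 : 0 < βB) (hβ1 : βB ≤ 1)
    (hSBne : {x ∈ 𝒳 | B x ≤ 0}.Nonempty)
    (hhB : ∀ x ∈ 𝒳, h x ≤ B x)
    (hCBF : ∀ x ∈ 𝒳, ∃ u ∈ U, B (f x u) ≤ βB * B x) :
    IsSACBF 𝒳 U f h (fun x u => max (h x) ((1 / βB) * B (f x u)))
      {x ∈ 𝒳 | B x ≤ 0} := by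
  have hβ : 0 < 1 / βB := by positivity
  refine ⟨fun x hx => hx.1, hSBne, fun x hx => (hhB x hx.1).trans hx.2, ?_, ?_⟩
  · rintro x ⟨hx, hBx⟩
    obtain ⟨u, hu, hBu⟩ := hCBF x hx
    -- The decrease condition gives `B (f x u) ≤ βB * B x ≤ 0`.
    have hBf : B (f x u) ≤ 0 := hBu.trans (mul_nonpos_of_nonneg_of_nonpos hβ0.le hBx)
    exact ⟨u, hu, max_le ((hhB x hx).trans hBx) (mul_nonpos_of_nonneg_of_nonpos hβ.le hBf)⟩
  · rintro x ⟨hx, -⟩ u hu hQ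
    exact ⟨hf x hx u hu, nonpos_of_mul_nonpos_right ((le_max_right _ _).trans hQ) hβ⟩
end

section
/- Solutions of the safety Bellman equation are SACBFs (Proposition 2, first part). Let Q^B : 𝒳 × U → ℝ be continuous and suppose it satisfies the Bellman optimality equation Q^B(x,u) = max{ h(x), min{ Q^B(f(x,u), u⁺) : u⁺ ∈ U } } for all (x,u) ∈ 𝒳 × U (the minimum over the compact set U being attained by continuity), and suppose there exists (x̄, ū) ∈ 𝒳 × U with Q^B(x̄, ū) ≤ 0. Then Q^B is an SACBF with safe set S_Q = { x ∈ 𝒳 : there exists u ∈ U with Q^B(x,u) ≤ 0 }. -/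
/-- Proposition 2 (first part): any continuous solution of the safety Bellman
optimality equation that takes a nonpositive value somewhere on `𝒳 × U` is an
SACBF with safe set `{ x ∈ 𝒳 : ∃ u ∈ U, Q^B(x,u) ≤ 0 }`. -/
theorem bellman_solution_is_SACBF {nx nu : ℕ}
    (𝒳 : Set (EuclideanSpace ℝ (Fin nx)))
    (U : Set (EuclideanSpace ℝ (Fin nu)))
    (hUne : U.Nonempty) (hUcomp : IsCompact U)
    (f : EuclideanSpace ℝ (Fin nx) → EuclideanSpace ℝ (Fin nu) → EuclideanSpace ℝ (Fin nx))
    (hf : ∀ x ∈ 𝒳, ∀ u ∈ U, f x u ∈ 𝒳)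
    (hfc : Continuous fun p : EuclideanSpace ℝ (Fin nx) × EuclideanSpace ℝ (Fin nu) => f p.1 p.2)
    (h : EuclideanSpace ℝ (Fin nx) → ℝ) (hhc : Continuous h)
    (QB : EuclideanSpace ℝ (Fin nx) → EuclideanSpace ℝ (Fin nu) → ℝ)
    (hQBc : Continuous fun p : EuclideanSpace ℝ (Fin nx) × EuclideanSpace ℝ (Fin nu) =>
      QB p.1 p.2)
    (hbellman : ∀ x ∈ 𝒳, ∀ u ∈ U, QB x u = max (h x) (sInf ((QB (f x u)) '' U)))
    (hex : ∃ x ∈ 𝒳, ∃ u ∈ U, QB x u ≤ 0) :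
    IsSACBF 𝒳 U f h QB {x ∈ 𝒳 | ∃ u ∈ U, QB x u ≤ 0} := by
  refine ⟨fun x hx => hx.1, ?_, ?_, fun x hx => hx.2, ?_⟩
  · obtain ⟨x, hx, hu⟩ := hex
    exact ⟨x, hx, hu⟩
  · rintro x ⟨hx, u, hu, hQ⟩
    rw [hbellman x hx u hu] at hQ
    exact (le_max_left _ _).trans hQ
  · rintro x ⟨hx, -⟩ u hu hQ
    rw [hbellman x hx u hu] at hQ
    -- The infimum in the Bellman equation is attained because `U` is compact and nonempty.
    have hc : Continuous (QB (f x u)) := hQBc.comp (Continuous.prodMk_right (f x u))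
    obtain ⟨v, hv, hmin⟩ := hUcomp.exists_sInf_image_eq hUne hc.continuousOn
    exact ⟨hf x hx u hu, v, hv, hmin ▸ (le_max_right _ _).trans hQ⟩
end

section
/- Feasibility step of Theorem 1. Let B : 𝒳 → ℝ be a CBF with constant β_B ∈ (0,1), let Q^B(x,u) := max{ h(x), (1/β_B)·B(f(x,u)) }, let ε ≥ 0, and let Q_ω : 𝒳 × U → ℝ satisfy |Q^B(x,u) − Q_ω(x,u)| ≤ ε for all (x,u) ∈ 𝒳 × U. Then for every x ∈ 𝒳 with B(x) ≤ (2β_B/(1−β_B))·ε, there exists u ∈ U with Q_ω(x,u) ≤ ((1+β_B)/(1−β_B))·ε. -/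
/-!
For the input `u` provided by the CBF condition at `x`, both `h x` and `(1/βB)·B(f x u)` are at
most `B x`, so `Q^B(x,u) ≤ B x`. Hence `Qω x u ≤ B x + ε ≤ (2βB/(1−βB) + 1)·ε`, and
`2βB/(1−βB) + 1 = (1+βB)/(1−βB)`.
-/

/-- Feasibility step of Theorem 1: for a CBF `B` with constant `βB ∈ (0,1)` and an
ε-accurate approximation `Qω` of the induced SACBF `Q^B(x,u) = max{h(x), (1/βB)·B(f(x,u))}`,
every state with `B(x) ≤ (2βB/(1−βB))·ε` admits an input `u ∈ U` with
`Qω(x,u) ≤ ((1+βB)/(1−βB))·ε`. -/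
theorem feasibility_step_thm1 {nx nu : ℕ}
    (𝒳 : Set (EuclideanSpace ℝ (Fin nx)))
    (U : Set (EuclideanSpace ℝ (Fin nu)))
    (hUne : U.Nonempty) (hUcomp : IsCompact U)
    (f : EuclideanSpace ℝ (Fin nx) → EuclideanSpace ℝ (Fin nu) → EuclideanSpace ℝ (Fin nx))
    (h B : EuclideanSpace ℝ (Fin nx) → ℝ)
    (βB ε : ℝ) (hβ0 : 0 < βB) (hβ1 : βB < 1) (hε : 0 ≤ ε)
    (hSBne : {x ∈ 𝒳 | B x ≤ 0}.Nonempty)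
    (hhB : ∀ x ∈ 𝒳, h x ≤ B x)
    (hCBF : ∀ x ∈ 𝒳, ∃ u ∈ U, B (f x u) ≤ βB * B x)
    (Qω : EuclideanSpace ℝ (Fin nx) → EuclideanSpace ℝ (Fin nu) → ℝ)
    (herr : ∀ x ∈ 𝒳, ∀ u ∈ U,
      |max (h x) ((1 / βB) * B (f x u)) - Qω x u| ≤ ε) :
    ∀ x ∈ 𝒳, B x ≤ (2 * βB / (1 - βB)) * ε →
      ∃ u ∈ U, Qω x u ≤ ((1 + βB) / (1 - βB)) * ε := by
  intro x hx hBx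
  -- The CBF input makes both terms of the maximum at most `B x`.
  obtain ⟨u, hu, hdec⟩ := hCBF x hx
  refine ⟨u, hu, ?_⟩
  have hQB : max (h x) ((1 / βB) * B (f x u)) ≤ B x := by
    refine max_le (hhB x hx) ?_
    rw [one_div, inv_mul_le_iff₀ hβ0]
    exact hdec
  have hQω := (abs_le.mp (herr x hx u hu)).1
  have hpos : 1 - βB ≠ 0 := by linarith
  have hsum : (1 + βB) / (1 - βB) * ε = 2 * βB / (1 - βB) * ε + ε := by
    field_simp
    ring
  linarith
end

section
/- Theorem 1, parts (i) and (ii) (ESSf for the supervised-learning method). Let B : 𝒳 → ℝ be a CBF with constant β_B ∈ (0,1), let Q^B(x,u) := max{ h(x), (1/β_B)·B(f(x,u)) }, let ε ≥ 0, and let Q_ω : 𝒳 × U → ℝ satisfy |Q^B(x,u) − Q_ω(x,u)| ≤ ε for all (x,u) ∈ 𝒳 × U. Set κ_ε := ((1+β_B)/(1−β_B))·ε and S_ω := { x ∈ 𝒳 : B(x) ≤ (2β_B/(1−β_B))·ε }. Then: (i) Q_ω is an ε-ESSf SACBF with relaxation κ_ε and safe set S_ω; (ii) S_ω is forward invariant,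 i.e., for any sequences (x_t), (u_t) with x_0 ∈ S_ω, u_t ∈ U, Q_ω(x_t,u_t) ≤ κ_ε, and x_{t+1} = f(x_t,u_t) for all t ∈ ℕ, it holds that x_t ∈ S_ω for all t ∈ ℕ. -/
/-!
Write `c = (2β/(1-β))ε` for the level defining the safe set and `κ = ((1+β)/(1-β))ε`.
The constants are chosen so that `κ = c + ε` and `β(κ + ε) = c`. The first identity makes the
relaxed constraint feasible: the input supplied by the CBF has `Q^B ≤ B ≤ c`, hence `Qω ≤ c + ε`.
The second gives invariance: `Qω ≤ κ` forces `B (f x u) / β ≤ Q^B ≤ κ + ε`, hence `B (f x u) ≤ c`.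
-/

/-- `Qhat` is an ε-error-to-state-safe SACBF with relaxation level `κ` and safe set `Shat`. -/
def IsESSfSACBF {nx nu : ℕ} (𝒳 : Set (EuclideanSpace ℝ (Fin nx)))
    (U : Set (EuclideanSpace ℝ (Fin nu)))
    (f : EuclideanSpace ℝ (Fin nx) → EuclideanSpace ℝ (Fin nu) → EuclideanSpace ℝ (Fin nx))
    (Qhat : EuclideanSpace ℝ (Fin nx) → EuclideanSpace ℝ (Fin nu) → ℝ)
    (κ : ℝ)
    (Shat : Set (EuclideanSpace ℝ (Fin nx))) : Prop :=
  Shat ⊆ 𝒳 ∧ Shat.Nonempty ∧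
    (∀ x ∈ Shat, ∃ u ∈ U, Qhat x u ≤ κ) ∧
    (∀ x ∈ Shat, ∀ u ∈ U, Qhat x u ≤ κ → f x u ∈ Shat)

/-- Theorem 1, parts (i) and (ii): for a CBF `B` with constant `βB ∈ (0,1)` and an
ε-accurate approximation `Qω` of the induced SACBF, `Qω` is an ε-ESSf SACBF with
relaxation `κε = ((1+βB)/(1−βB))·ε` and safe set `Sω = {x ∈ 𝒳 : B x ≤ (2βB/(1−βB))·ε}`,
and `Sω` is forward invariant along trajectories satisfying the relaxed SACBF constraint. -/
theorem ESSf_supervised_learning {nx nu : ℕ}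
    (𝒳 : Set (EuclideanSpace ℝ (Fin nx)))
    (U : Set (EuclideanSpace ℝ (Fin nu)))
    (hUne : U.Nonempty) (hUcomp : IsCompact U)
    (f : EuclideanSpace ℝ (Fin nx) → EuclideanSpace ℝ (Fin nu) → EuclideanSpace ℝ (Fin nx))
    (hf : ∀ x ∈ 𝒳, ∀ u ∈ U, f x u ∈ 𝒳)
    (h B : EuclideanSpace ℝ (Fin nx) → ℝ)
    (βB ε : ℝ) (hβ0 : 0 < βB) (hβ1 : βB < 1) (hε : 0 ≤ ε)
    (hSBne : {x ∈ 𝒳 | B x ≤ 0}.Nonempty)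
    (hhB : ∀ x ∈ 𝒳, h x ≤ B x)
    (hCBF : ∀ x ∈ 𝒳, ∃ u ∈ U, B (f x u) ≤ βB * B x)
    (Qω : EuclideanSpace ℝ (Fin nx) → EuclideanSpace ℝ (Fin nu) → ℝ)
    (herr : ∀ x ∈ 𝒳, ∀ u ∈ U,
      |max (h x) ((1 / βB) * B (f x u)) - Qω x u| ≤ ε) :
    IsESSfSACBF 𝒳 U f Qω (((1 + βB) / (1 - βB)) * ε)
        {x ∈ 𝒳 | B x ≤ (2 * βB / (1 - βB)) * ε} ∧
      (∀ (x : ℕ → EuclideanSpace ℝ (Fin nx)) (u : ℕ → EuclideanSpace ℝ (Fin nu)),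
        x 0 ∈ {x ∈ 𝒳 | B x ≤ (2 * βB / (1 - βB)) * ε} →
        (∀ t : ℕ, u t ∈ U) →
        (∀ t : ℕ, Qω (x t) (u t) ≤ ((1 + βB) / (1 - βB)) * ε) →
        (∀ t : ℕ, x (t + 1) = f (x t) (u t)) →
        ∀ t : ℕ, x t ∈ {x ∈ 𝒳 | B x ≤ (2 * βB / (1 - βB)) * ε}) := by
  have hne : 1 - βB ≠ 0 := by linarith
  have hκ : ((1 + βB) / (1 - βB)) * ε = (2 * βB / (1 - βB)) * ε + ε := by
    field_simp
    ring
  have hc : βB * (((1 + βB) / (1 - βB)) * ε + ε) = (2 * βB / (1 - βB)) * ε := by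
    field_simp
    ring
  have hc0 : 0 ≤ (2 * βB / (1 - βB)) * ε :=
    mul_nonneg (div_nonneg (by linarith) (by linarith)) hε
  have hstep : ∀ x ∈ {x ∈ 𝒳 | B x ≤ (2 * βB / (1 - βB)) * ε}, ∀ u ∈ U,
      Qω x u ≤ ((1 + βB) / (1 - βB)) * ε →
      f x u ∈ {x ∈ 𝒳 | B x ≤ (2 * βB / (1 - βB)) * ε} := by
    rintro x ⟨hx, -⟩ u hu hQ
    refine ⟨hf x hx u hu, ?_⟩
    have h1 := (abs_le.mp (herr x hx u hu)).2
    have h2 := le_max_right (h x) ((1 / βB) * B (f x u))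
    have h3 : (1 / βB) * B (f x u) ≤ ((1 + βB) / (1 - βB)) * ε + ε := by linarith
    rw [← hc]
    rwa [one_div, inv_mul_le_iff₀ hβ0] at h3
  refine ⟨⟨fun x hx => hx.1, ?_, ?_, hstep⟩, ?_⟩
  · obtain ⟨x, hx, hB⟩ := hSBne
    exact ⟨x, hx, le_trans hB hc0⟩
  · rintro x ⟨hx, hB⟩
    obtain ⟨u, hu, hBu⟩ := hCBF x hx
    refine ⟨u, hu, ?_⟩
    have h1 := (abs_le.mp (herr x hx u hu)).1
    -- The CBF input gives `Q^B x u ≤ B x`, so `Qω x u` exceeds `B x` by at most `ε`.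
    have h2 : max (h x) ((1 / βB) * B (f x u)) ≤ B x := by
      refine max_le (hhB x hx) ?_
      rwa [one_div, inv_mul_le_iff₀ hβ0]
    linarith
  · intro x u h0 hu hQ hdyn t
    induction t with
    | zero => exact h0
    | succ t ih =>
      rw [hdyn t]
      exact hstep _ ih _ (hu t) (hQ t)
end

section
/- Theorem 1, part (iii) (constraint satisfaction under tightening). Let B : 𝒳 → ℝ be a CBF with constant β_B ∈ (0,1), let Q^B(x,u) := max{ h(x), (1/β_B)·B(f(x,u)) }, let ε ≥ 0, and let Q_ω : 𝒳 × U → ℝ satisfy |Q^B(x,u) − Q_ω(x,u)| ≤ ε for all (x,u) ∈ 𝒳 × U. Suppose additionally that h(x) + (2β_B/(1−β_B))·ε ≤ B(x) for all x ∈ 𝒳 (i.e., B is a CBF for the tightened state constraint). Then for any sequences (x_t), (u_t) with x_0 ∈ S_ω := { x ∈ 𝒳 : B(x) ≤ (2β_B/(1−β_B))·ε }, u_t ∈ U, Q_ω(x_t,u_t) ≤ ((1+β_B)/(1−β_B))·ε, and x_{t+1} = f(x_t,u_t) for all t ∈ ℕ, it holds that h(x_t) ≤ 0 and u_t ∈ U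 for all t ∈ ℕ. -/
/-!
The relaxed sublevel set `{x ∈ 𝒳 | B x ≤ (2 * βB / (1 - βB)) * ε}` is forward invariant under the
admissible inputs: the bound on `Qω` and the approximation error give
`B (f x u) / βB ≤ ((1 + βB) / (1 - βB)) * ε + ε = (2 / (1 - βB)) * ε`. On that set the tightened
inequality between `h` and `B` forces `h ≤ 0`.
-/

/-- Theorem 1, part (iii): under the additional tightening condition
`h(x) + (2βB/(1−βB))·ε ≤ B(x)` on `𝒳`, trajectories starting in
`Sω = {x ∈ 𝒳 : B x ≤ (2βB/(1−βB))·ε}` whose inputs satisfy the relaxed SACBF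
constraint satisfy the original state and input constraints for all times. -/
theorem constraint_satisfaction_thm1 {nx nu : ℕ}
    (𝒳 : Set (EuclideanSpace ℝ (Fin nx)))
    (U : Set (EuclideanSpace ℝ (Fin nu)))
    (hUne : U.Nonempty) (hUcomp : IsCompact U)
    (f : EuclideanSpace ℝ (Fin nx) → EuclideanSpace ℝ (Fin nu) → EuclideanSpace ℝ (Fin nx))
    (hf : ∀ x ∈ 𝒳, ∀ u ∈ U, f x u ∈ 𝒳)
    (h B : EuclideanSpace ℝ (Fin nx) → ℝ)
    (βB ε : ℝ) (hβ0 : 0 < βB) (hβ1 : βB < 1) (hε : 0 ≤ ε)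
    (hSBne : {x ∈ 𝒳 | B x ≤ 0}.Nonempty)
    (hhB : ∀ x ∈ 𝒳, h x ≤ B x)
    (hCBF : ∀ x ∈ 𝒳, ∃ u ∈ U, B (f x u) ≤ βB * B x)
    (Qω : EuclideanSpace ℝ (Fin nx) → EuclideanSpace ℝ (Fin nu) → ℝ)
    (herr : ∀ x ∈ 𝒳, ∀ u ∈ U,
      |max (h x) ((1 / βB) * B (f x u)) - Qω x u| ≤ ε)
    (htight : ∀ x ∈ 𝒳, h x + (2 * βB / (1 - βB)) * ε ≤ B x) :
    ∀ (x : ℕ → EuclideanSpace ℝ (Fin nx)) (u : ℕ → EuclideanSpace ℝ (Fin nu)),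
      x 0 ∈ {x ∈ 𝒳 | B x ≤ (2 * βB / (1 - βB)) * ε} →
      (∀ t : ℕ, u t ∈ U) →
      (∀ t : ℕ, Qω (x t) (u t) ≤ ((1 + βB) / (1 - βB)) * ε) →
      (∀ t : ℕ, x (t + 1) = f (x t) (u t)) →
      ∀ t : ℕ, h (x t) ≤ 0 ∧ u t ∈ U := by
  intro x u hx0 hu hQ hdyn
  -- The sublevel set `Sω` is forward invariant: `B (f x u) / βB` exceeds `Qω x u` by at most `ε`,
  -- and `(1 + βB) / (1 - βB) + 1 = 2 / (1 - βB)`.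
  have inv : ∀ t, x t ∈ 𝒳 ∧ B (x t) ≤ (2 * βB / (1 - βB)) * ε := by
    intro t
    induction t with
    | zero => exact hx0
    | succ t ih =>
      rw [hdyn t]
      refine ⟨hf _ ih.1 _ (hu t), ?_⟩
      have h1 := (abs_le.mp (herr _ ih.1 _ (hu t))).2
      have h2 := le_max_right (h (x t)) ((1 / βB) * B (f (x t) (u t)))
      have h3 : (1 / βB) * B (f (x t) (u t)) ≤ ((1 + βB) / (1 - βB)) * ε + ε := by
        linarith [hQ t]
      have h4 : 1 - βB ≠ 0 := by linarith
      calc B (f (x t) (u t)) = βB * ((1 / βB) * B (f (x t) (u t))) := by field_simp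
        _ ≤ βB * (((1 + βB) / (1 - βB)) * ε + ε) := mul_le_mul_of_nonneg_left h3 hβ0.le
        _ = (2 * βB / (1 - βB)) * ε := by field_simp; ring
  exact fun t => ⟨by linarith [htight _ (inv t).1, (inv t).2], hu t⟩
end

section
/- Theorem 2, parts (i) and (ii) (ESSf for the expert-guided learning method). Let β ∈ [0,1) and ε ≥ 0, let q_ω : 𝒳 → ℝ, Q_ω : 𝒳 × U → ℝ, and π_s : 𝒳 → ℝ^{n_u} with π_s(x) ∈ U for all x ∈ 𝒳. Set κ_ε := ((1+β)/(1−β))·ε and S_ω := { x ∈ 𝒳 : q_ω(x) ≤ (2/(1−β))·ε }. Suppose: (a) Q_ω(x, π_s(x)) ≤ β·q_ω(x) + ε for all x ∈ S_ω; (b) q_ω(f(x,u)) ≤ Q_ω(x,u) + ε for all x ∈ S_ω and u ∈ U; (c) there exists x ∈ 𝒳 with q_ω(x) ≤ (2/(1−β))·ε. Then: (i) Q_ω is an ε-ESSf SACBF with relaxation κ_ε and safe set S_ω; (ii) S_ω is forward invariant, i.e., for any sequences (x_t), (u_t) with x_0 ∈ S_ω, u_t ∈ U, Q_ω(x_t,u_t)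 ≤ κ_ε, and x_{t+1} = f(x_t,u_t) for all t ∈ ℕ, it holds that x_t ∈ S_ω for all t ∈ ℕ. -/
/-- Theorem 2, parts (i) and (ii) (ESSf for the expert-guided learning method):
under the approximate expert conditions (a)–(c), `Qω` is an ε-ESSf SACBF with
relaxation `κε = ((1+β)/(1−β))·ε` and safe set `Sω = {x ∈ 𝒳 : qω x ≤ (2/(1−β))·ε}`,
and `Sω` is forward invariant along trajectories satisfying the relaxed SACBF constraint. -/
theorem ESSf_expert_guided {nx nu : ℕ}
    (𝒳 : Set (EuclideanSpace ℝ (Fin nx)))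
    (U : Set (EuclideanSpace ℝ (Fin nu)))
    (hUne : U.Nonempty) (hUcomp : IsCompact U)
    (f : EuclideanSpace ℝ (Fin nx) → EuclideanSpace ℝ (Fin nu) → EuclideanSpace ℝ (Fin nx))
    (hf : ∀ x ∈ 𝒳, ∀ u ∈ U, f x u ∈ 𝒳)
    (β ε : ℝ) (hβ0 : 0 ≤ β) (hβ1 : β < 1) (hε : 0 ≤ ε)
    (qω : EuclideanSpace ℝ (Fin nx) → ℝ)
    (Qω : EuclideanSpace ℝ (Fin nx) → EuclideanSpace ℝ (Fin nu) → ℝ)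
    (πs : EuclideanSpace ℝ (Fin nx) → EuclideanSpace ℝ (Fin nu))
    (hπs : ∀ x ∈ 𝒳, πs x ∈ U)
    (ha : ∀ x ∈ {x ∈ 𝒳 | qω x ≤ (2 / (1 - β)) * ε}, Qω x (πs x) ≤ β * qω x + ε)
    (hb : ∀ x ∈ {x ∈ 𝒳 | qω x ≤ (2 / (1 - β)) * ε}, ∀ u ∈ U,
      qω (f x u) ≤ Qω x u + ε)
    (hc : ∃ x ∈ 𝒳, qω x ≤ (2 / (1 - β)) * ε) :
    IsESSfSACBF 𝒳 U f Qω (((1 + β) / (1 - β)) * ε)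
        {x ∈ 𝒳 | qω x ≤ (2 / (1 - β)) * ε} ∧
      (∀ (x : ℕ → EuclideanSpace ℝ (Fin nx)) (u : ℕ → EuclideanSpace ℝ (Fin nu)),
        x 0 ∈ {x ∈ 𝒳 | qω x ≤ (2 / (1 - β)) * ε} →
        (∀ t : ℕ, u t ∈ U) →
        (∀ t : ℕ, Qω (x t) (u t) ≤ ((1 + β) / (1 - β)) * ε) →
        (∀ t : ℕ, x (t + 1) = f (x t) (u t)) →
        ∀ t : ℕ, x t ∈ {x ∈ 𝒳 | qω x ≤ (2 / (1 - β)) * ε}) := by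
  have h1 : (1 - β) ≠ 0 := by linarith
  have hκ : β * ((2 / (1 - β)) * ε) + ε = ((1 + β) / (1 - β)) * ε := by
    field_simp
    ring
  have hr : ((1 + β) / (1 - β)) * ε + ε = (2 / (1 - β)) * ε := by
    field_simp
    ring
  have step : ∀ x ∈ {x ∈ 𝒳 | qω x ≤ (2 / (1 - β)) * ε}, ∀ u ∈ U,
      Qω x u ≤ ((1 + β) / (1 - β)) * ε → f x u ∈ {x ∈ 𝒳 | qω x ≤ (2 / (1 - β)) * ε} := by
    intro x hx u hu hQ
    exact ⟨hf x hx.1 u hu, by linarith [hb x hx u hu]⟩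
  refine ⟨⟨fun x hx => hx.1, hc, fun x hx => ⟨πs x, hπs x hx.1, ?_⟩, step⟩, ?_⟩
  · linarith [ha x hx, mul_le_mul_of_nonneg_left hx.2 hβ0]
  · intro x u h0 hu hQ hx t
    induction t with
    | zero => exact h0
    | succ t ih =>
      rw [hx t]
      exact step _ ih _ (hu t) (hQ t)
end

section
/- Theorem 2, part (iii) (constraint satisfaction under tightening, expert-guided method). Let β ∈ [0,1) and ε ≥ 0, let q_ω : 𝒳 → ℝ, Q_ω : 𝒳 × U → ℝ, and π_s : 𝒳 → ℝ^{n_u} with π_s(x) ∈ U for all x ∈ 𝒳. Set S_ω := { x ∈ 𝒳 : q_ω(x) ≤ (2/(1−β))·ε }. Suppose: (a) Q_ω(x, π_s(x)) ≤ β·q_ω(x) + ε for all x ∈ S_ω; (b) q_ω(f(x,u)) ≤ Q_ω(x,u) + ε for all x ∈ S_ω and u ∈ U; and (c) h(x) + (2/(1−β))·ε ≤ q_ω(x) for all x ∈ 𝒳. Then for any sequences (x_t), (u_t) with x_0 ∈ S_ω, u_t ∈ U, Q_ω(x_t,u_t) ≤ ((1+β)/(1−β))·ε, and x_{t+1} =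 f(x_t,u_t) for all t ∈ ℕ, it holds that h(x_t) ≤ 0 and u_t ∈ U for all t ∈ ℕ. -/
/-!
The sublevel set `Sω` is invariant along the trajectory: if `x t ∈ Sω`, then (b) and the bound on
`Qω (x t) (u t)` give `qω (x (t + 1)) ≤ ((1 + β) / (1 - β)) * ε + ε = (2 / (1 - β)) * ε`.
On `Sω`, the tightening (c) then forces `h ≤ 0`.
-/

/-- Theorem 2, part (iii) (constraint satisfaction under tightening, expert-guided
method): under the approximate expert conditions (a), (b) and the tightening
condition (c), trajectories starting in `Sω = {x ∈ 𝒳 : qω x ≤ (2/(1−β))·ε}` whose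
inputs satisfy the relaxed SACBF constraint satisfy the original state and input
constraints for all times. -/
theorem constraint_satisfaction_thm2 {nx nu : ℕ}
    (𝒳 : Set (EuclideanSpace ℝ (Fin nx)))
    (U : Set (EuclideanSpace ℝ (Fin nu)))
    (hUne : U.Nonempty) (hUcomp : IsCompact U)
    (f : EuclideanSpace ℝ (Fin nx) → EuclideanSpace ℝ (Fin nu) → EuclideanSpace ℝ (Fin nx))
    (hf : ∀ x ∈ 𝒳, ∀ u ∈ U, f x u ∈ 𝒳)
    (h : EuclideanSpace ℝ (Fin nx) → ℝ)
    (β ε : ℝ) (hβ0 : 0 ≤ β) (hβ1 : β < 1) (hε : 0 ≤ ε)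
    (qω : EuclideanSpace ℝ (Fin nx) → ℝ)
    (Qω : EuclideanSpace ℝ (Fin nx) → EuclideanSpace ℝ (Fin nu) → ℝ)
    (πs : EuclideanSpace ℝ (Fin nx) → EuclideanSpace ℝ (Fin nu))
    (hπs : ∀ x ∈ 𝒳, πs x ∈ U)
    (ha : ∀ x ∈ {x ∈ 𝒳 | qω x ≤ (2 / (1 - β)) * ε}, Qω x (πs x) ≤ β * qω x + ε)
    (hb : ∀ x ∈ {x ∈ 𝒳 | qω x ≤ (2 / (1 - β)) * ε}, ∀ u ∈ U,
      qω (f x u) ≤ Qω x u + ε)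
    (hc : ∀ x ∈ 𝒳, h x + (2 / (1 - β)) * ε ≤ qω x) :
    ∀ (x : ℕ → EuclideanSpace ℝ (Fin nx)) (u : ℕ → EuclideanSpace ℝ (Fin nu)),
      x 0 ∈ {x ∈ 𝒳 | qω x ≤ (2 / (1 - β)) * ε} →
      (∀ t : ℕ, u t ∈ U) →
      (∀ t : ℕ, Qω (x t) (u t) ≤ ((1 + β) / (1 - β)) * ε) →
      (∀ t : ℕ, x (t + 1) = f (x t) (u t)) →
      ∀ t : ℕ, h (x t) ≤ 0 ∧ u t ∈ U := by
  intro x u hx0 hu hQ hstep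
  have hβ : 1 - β ≠ 0 := by linarith
  -- One unit of `ε` is exactly the gap between the input bound and the level defining `Sω`.
  have hlevel : (1 + β) / (1 - β) * ε + ε = 2 / (1 - β) * ε := by
    field_simp
    ring
  have hS : ∀ t, x t ∈ {x ∈ 𝒳 | qω x ≤ (2 / (1 - β)) * ε} := by
    intro t
    induction t with
    | zero => exact hx0
    | succ t ih =>
      rw [hstep t]
      refine ⟨hf _ ih.1 _ (hu t), ?_⟩
      linarith [hb _ ih _ (hu t), hQ t]
  intro t
  exact ⟨by linarith [hc _ (hS t).1, (hS t).2], hu t⟩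
end
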